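/- arXiv:1906.05417 — 2 statements merged into one kernel-verified Lean document; each statement's English description precedes it below -/
import Mathlib

section
/- Let S be a nonempty type, F the free group on S, and H the subgroup of F generated by the set of all products of two generators {of s * of t : s, t ∈ S}. Then H equals the kernel of the word-length-parity homomorphism φ : F → Multiplicative (ZMod 2), i.e. H consists exactly of those elements of F whose reduced word has even length. (In particular, every word of length 2 over S ∪ S⁻¹, and hence every even-length word, is a product of positive length-2 words and their inverses.) -/
/-!
Let `H` be the subgroup generated by the products of two elements of `A`. All `a ∈ A` define the
same left coset `a H = a⁻¹ H`, and left multiplication by any element of `A` swaps it with `H`. So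
`H` has at most two left cosets in the subgroup generated by `A`, and a homomorphism sending all of
`A` to one element `c ≠ 1` with `c * c = 1` tells them apart.
-/

open scoped Pointwise

section GeneratingSet

variable {G : Type*} [Group G] {A : Set G}

theorem mul_mem_closure_mul_self {a b : G} (ha : a ∈ A) (hb : b ∈ A) :
    a * b ∈ Subgroup.closure (A * A) :=
  Subgroup.subset_closure (Set.mul_mem_mul ha hb)

theorem mul_inv_mem_closure_mul_self {a b : G} (ha : a ∈ A) (hb : b ∈ A) :
    a * b⁻¹ ∈ Subgroup.closure (A * A) := by
  have h : a * b * (b * b)⁻¹ ∈ Subgroup.closure (A * A) :=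
    mul_mem (mul_mem_closure_mul_self ha hb) (inv_mem (mul_mem_closure_mul_self hb hb))
  rwa [show a * b * (b * b)⁻¹ = a * b⁻¹ by group] at h

theorem mem_or_exists_mul_mem_closure_mul_self {x : G} (hx : x ∈ Subgroup.closure A) :
    x ∈ Subgroup.closure (A * A) ∨ ∃ a ∈ A, a * x ∈ Subgroup.closure (A * A) := by
  induction hx using Subgroup.closure_induction_left with
  | one => exact .inl (one_mem _)
  | mul_left b hb y _ ih =>
    obtain hy | ⟨a, ha, hay⟩ := ih
    · refine .inr ⟨b, hb, ?_⟩
      rw [← mul_assoc]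
      exact mul_mem (mul_mem_closure_mul_self hb hb) hy
    · left
      rw [show b * y = b * a⁻¹ * (a * y) by group]
      exact mul_mem (mul_inv_mem_closure_mul_self hb ha) hay
  | inv_mul_cancel b hb y _ ih =>
    obtain hy | ⟨a, ha, hay⟩ := ih
    · exact .inr ⟨b, hb, by rwa [mul_inv_cancel_left]⟩
    · left
      rw [show b⁻¹ * y = (a * b)⁻¹ * (a * y) by group]
      exact mul_mem (inv_mem (mul_mem_closure_mul_self ha hb)) hay

variable {M : Type*} [MulOneClass M] {φ : G →* M} {c : M}

theorem closure_mul_self_le_ker (hφ : ∀ a ∈ A, φ a = c) (hcc : c * c = 1) :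
    Subgroup.closure (A * A) ≤ φ.ker := by
  rw [Subgroup.closure_le]
  rintro _ ⟨a, ha, b, hb, rfl⟩
  simp [MonoidHom.mem_ker, hφ a ha, hφ b hb, hcc]

theorem even_length_subgroup_eq_parity_ker_general (hφ : ∀ a ∈ A, φ a = c) (hcc : c * c = 1)
    (hc : c ≠ 1) : Subgroup.closure (A * A) = Subgroup.closure A ⊓ φ.ker := by
  have hker : Subgroup.closure (A * A) ≤ φ.ker := closure_mul_self_le_ker hφ hcc
  refine le_antisymm (le_inf ?_ hker) ?_
  · rw [Subgroup.closure_le]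
    rintro _ ⟨a, ha, b, hb, rfl⟩
    exact mul_mem (Subgroup.subset_closure ha) (Subgroup.subset_closure hb)
  · rintro x ⟨hxA, hx⟩
    refine (mem_or_exists_mul_mem_closure_mul_self hxA).resolve_right ?_
    rintro ⟨a, ha, hax⟩
    have ha_ker : a ∈ φ.ker := (Subgroup.mul_mem_cancel_right _ hx).mp (hker hax)
    exact hc ((hφ a ha).symm.trans ha_ker)

end GeneratingSet

theorem setOf_of_mul_of_eq_range_mul_range (S : Type*) :
    {x : FreeGroup S | ∃ s t : S, x = FreeGroup.of s * FreeGroup.of t} =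
      Set.range FreeGroup.of * Set.range FreeGroup.of := by
  ext x
  simp [Set.mem_mul, eq_comm]

/-- The subgroup of a free group generated by all products of two generators
equals the kernel of the word-length-parity homomorphism. -/
theorem even_length_subgroup_eq_parity_ker (S : Type*) [Nonempty S] :
    Subgroup.closure {x : FreeGroup S | ∃ s t : S, x = FreeGroup.of s * FreeGroup.of t} =
      (FreeGroup.lift (fun _ : S => Multiplicative.ofAdd (1 : ZMod 2))).ker := by
  have hφ : ∀ x ∈ Set.range (FreeGroup.of : S → FreeGroup S),
      FreeGroup.lift (fun _ : S => Multiplicative.ofAdd (1 : ZMod 2)) x = Multiplicative.ofAdd 1 :=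
    Set.forall_mem_range.2 fun _ => FreeGroup.lift_apply_of
  rw [setOf_of_mul_of_eq_range_mul_range,
    even_length_subgroup_eq_parity_ker_general hφ (by decide) (by decide),
    FreeGroup.closure_range_of, top_inf_eq]
end

section
/- Fix a real density d with 1/6 < d < 1. Then the sequence of ratios of binomial coefficients m ↦ ((m^6 − m^5).choose ⌈(m:ℝ)^(6d)⌉₊ : ℝ) / ((m^6).choose ⌈(m:ℝ)^(6d)⌉₊ : ℝ) tends to 0 as the natural number m → ∞. -/
/-!
A uniformly random `k`-subset of an `N`-set avoids `s` distinguished points with probability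
`∏ i < k, (N - s - i) / (N - i)`. Each factor is at most `(N - s) / N = 1 - s / N ≤ exp (-s / N)`,
so the probability is at most `exp (-k s / N)` and vanishes in the limit as soon as the expected
number `k s / N` of distinguished points in the subset tends to infinity. For `N = m ^ 6`,
`s = m ^ 5` and `k = ⌈m ^ (6 d)⌉` this number is at least `m ^ (6 d - 1)`.
-/

open Filter

lemma descFactorial_mul_pow_le {a b : ℕ} (hab : a ≤ b) (k : ℕ) :
    a.descFactorial k * b ^ k ≤ b.descFactorial k * a ^ k := by
  induction k with
  | zero => rfl
  | succ k ih =>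
    have factor_le : (a - k) * b ≤ (b - k) * a := by
      rw [Nat.sub_mul, Nat.sub_mul, Nat.mul_comm b a]
      gcongr
    calc a.descFactorial (k + 1) * b ^ (k + 1)
        = (a - k) * b * (a.descFactorial k * b ^ k) := by
          rw [Nat.descFactorial_succ]; ring
      _ ≤ (b - k) * a * (b.descFactorial k * a ^ k) := Nat.mul_le_mul factor_le ih
      _ = b.descFactorial (k + 1) * a ^ (k + 1) := by
          rw [Nat.descFactorial_succ]; ring

lemma choose_mul_pow_le {a b : ℕ} (hab : a ≤ b) (k : ℕ) :
    a.choose k * b ^ k ≤ b.choose k * a ^ k := by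
  refine Nat.le_of_mul_le_mul_left ?_ k.factorial_pos
  simpa only [Nat.descFactorial_eq_factorial_mul_choose, mul_assoc]
    using descFactorial_mul_pow_le hab k

lemma choose_div_choose_le_div_pow {K : Type*} [Field K] [LinearOrder K] [IsStrictOrderedRing K]
    {a b : ℕ} (hab : a ≤ b) (k : ℕ) :
    (a.choose k : K) / b.choose k ≤ ((a : K) / b) ^ k := by
  rcases lt_or_ge b k with hbk | hkb
  · rw [Nat.choose_eq_zero_of_lt hbk, Nat.cast_zero, div_zero]
    positivity
  · have choose_pos : (0 : K) < b.choose k := mod_cast Nat.choose_pos hkb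
    have pow_pos : (0 : K) < (b : K) ^ k := by
      rcases b.eq_zero_or_pos with rfl | hb
      · simp [Nat.le_zero.mp hkb]
      · positivity
    rw [div_pow, div_le_div_iff₀ choose_pos pow_pos, mul_comm ((a : K) ^ k)]
    exact mod_cast choose_mul_pow_le hab k

lemma natCast_sub_div_le_exp (N s : ℕ) : ((N - s : ℕ) : ℝ) / N ≤ Real.exp (-(s / N)) := by
  rcases le_total s N with hsN | hNs
  · calc ((N - s : ℕ) : ℝ) / N = N / N - s / N := by rw [Nat.cast_sub hsN, sub_div]
      _ ≤ 1 - s / N := by gcongr; exact div_self_le_one _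
      _ ≤ Real.exp (-(s / N)) := Real.one_sub_le_exp_neg _
  · rw [Nat.sub_eq_zero_of_le hNs, Nat.cast_zero, zero_div]
    positivity

lemma choose_sub_div_choose_le_exp (N s k : ℕ) :
    ((N - s).choose k : ℝ) / N.choose k ≤ Real.exp (-(k * (s / N))) :=
  calc ((N - s).choose k : ℝ) / N.choose k
      ≤ (((N - s : ℕ) : ℝ) / N) ^ k := choose_div_choose_le_div_pow (Nat.sub_le N s) k
    _ ≤ Real.exp (-(s / N)) ^ k := by gcongr; exact natCast_sub_div_le_exp N s
    _ = Real.exp (-(k * (s / N))) := by rw [← Real.exp_nat_mul, mul_neg]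

lemma tendsto_choose_sub_div_choose_zero {ι : Type*} {l : Filter ι} {N s k : ι → ℕ}
    (h : Tendsto (fun i => (k i : ℝ) * (s i / N i)) l atTop) :
    Tendsto (fun i => ((N i - s i).choose (k i) : ℝ) / (N i).choose (k i)) l (nhds 0) :=
  squeeze_zero (fun _ => by positivity) (fun i => choose_sub_div_choose_le_exp (N i) (s i) (k i))
    (Real.tendsto_exp_neg_atTop_nhds_zero.comp h)

lemma tendsto_ceil_rpow_div_atTop {r : ℝ} (hr : 1 < r) :
    Tendsto (fun m : ℕ => (⌈(m : ℝ) ^ r⌉₊ : ℝ) / m) atTop atTop := by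
  have rpow_atTop : Tendsto (fun m : ℕ => (m : ℝ) ^ (r - 1)) atTop atTop :=
    (tendsto_rpow_atTop (sub_pos.mpr hr)).comp tendsto_natCast_atTop_atTop
  refine tendsto_atTop_mono' atTop ?_ rpow_atTop
  filter_upwards [eventually_ne_atTop 0] with m hm
  rw [Real.rpow_sub_one (Nat.cast_ne_zero.mpr hm)]
  gcongr
  exact Nat.le_ceil _

/-- For density `1/6 < d < 1`, the ratio
`choose (m^6 - m^5) ⌈m^(6d)⌉ / choose (m^6) ⌈m^(6d)⌉` tends to `0`. -/
theorem tendsto_choose_ratio_zero (d : ℝ) (hd1 : 1 / 6 < d) (hd2 : d < 1) :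
    Filter.Tendsto (fun m : ℕ =>
        (((m ^ 6 - m ^ 5).choose ⌈(m : ℝ) ^ (6 * d)⌉₊ : ℝ)) /
          (((m ^ 6).choose ⌈(m : ℝ) ^ (6 * d)⌉₊ : ℝ)))
      Filter.atTop (nhds 0) := by
  apply tendsto_choose_sub_div_choose_zero
  refine (tendsto_ceil_rpow_div_atTop (r := 6 * d) (by linarith)).congr' ?_
  filter_upwards [eventually_ne_atTop 0] with m hm
  have density : ((m ^ 5 : ℕ) : ℝ) / (m ^ 6 : ℕ) = 1 / m := by
    push_cast
    field_simp
  rw [density, mul_one_div]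
end
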